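/- arXiv:2406.17593 — 3 statements merged into one kernel-verified Lean document; each statement's English description precedes it below -/
import Mathlib

section
/- Let m be a positive integer and let 2 ≤ t_1 < t_2 < ⋯ < t_m be integers such that ∑_{k=1}^m 1/(t_k − 1) > 1. Then there exist sets A_1, …, A_m ⊆ ℕ, at least one of which is infinite, such that ∑_{k=1}^m ∑_{n∈A_k} 1/(t_k^n − 1) is a rational number. -/
open scoped Classical

/-- Remainders of the strict greedy algorithm. -/
noncomputable def greedyRem (x : ℕ → ℝ) (q : ℝ) : ℕ → ℝ
  | 0 => q
  | (i + 1) => if x i < greedyRem x q i then greedyRem x q i - x i else greedyRem x q i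

theorem greedy_seq (x : ℕ → ℝ) (hx : ∀ i, 0 ≤ x i) (hs : Summable x)
    (ht : ∀ i, x i ≤ ∑' j, x (j + (i + 1))) (q : ℝ) (hq : 0 < q) (hqS : q ≤ ∑' i, x i) :
    ∃ B : Set ℕ, {i | i ∈ B ∧ 0 < x i}.Infinite ∧ HasSum (B.indicator x) q := by
  set r := greedyRem x q with hr
  have r0 : r 0 = q := rfl
  have rs : ∀ i, r (i + 1) = if x i < r i then r i - x i else r i := fun i => rfl
  have rpos : ∀ i, 0 < r i := by
    intro i
    induction i with
    | zero => exact hq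
    | succ i ih =>
      rw [rs]
      split_ifs with h
      · linarith
      · exact ih
  have rle : ∀ i, r i ≤ ∑' j, x (j + i) := by
    intro i
    induction i with
    | zero => simpa [r0] using hqS
    | succ i ih =>
      have h1 : ∑' j, x (j + i) = x i + ∑' j, x (j + (i + 1)) := by
        have := ((summable_nat_add_iff i).2 hs).tsum_eq_zero_add
        rw [this]
        simp [add_assoc, add_comm 1 i]
      rw [rs]
      split_ifs with h
      · linarith
      · have := ht i
        linarith
  have rlim : Filter.Tendsto r Filter.atTop (nhds 0) :=
    squeeze_zero (fun i => (rpos i).le) rle (tendsto_sum_nat_add x)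
  refine ⟨{i | x i < r i}, ?_, ?_⟩
  · intro hfin
    obtain ⟨M, hM⟩ := hfin.bddAbove
    have hconst : ∀ d, r (M + 1 + d) = r (M + 1) := by
      intro d
      induction d with
      | zero => rfl
      | succ d ih =>
        rw [← add_assoc, rs]
        split_ifs with h
        · have : ¬ 0 < x (M + 1 + d) := by
            intro h0
            have := hM (show M + 1 + d ∈ _ from ⟨h, h0⟩)
            omega
          have h2 := hx (M + 1 + d)
          linarith
        · exact ih
    have h1 : Filter.Tendsto (fun d => r (d + (M + 1))) Filter.atTop (nhds 0) :=
      (Filter.tendsto_add_atTop_iff_nat (M + 1)).2 rlim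
    have h2 : (fun d => r (d + (M + 1))) = fun _ => r (M + 1) := by
      funext d
      rw [add_comm, hconst]
    rw [h2] at h1
    have h3 := tendsto_nhds_unique h1 tendsto_const_nhds
    have := rpos (M + 1)
    linarith
  · rw [hasSum_iff_tendsto_nat_of_nonneg (fun i => Set.indicator_nonneg (fun i _ => hx i) i)]
    have hpart : ∀ n, ∑ i ∈ Finset.range n, Set.indicator {i | x i < r i} x i = q - r n := by
      intro n
      induction n with
      | zero => simp [r0]
      | succ n ih =>
        rw [Finset.sum_range_succ, ih, rs, Set.indicator_apply]
        simp only [Set.mem_ofPred_eq]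
        split_ifs <;> ring
    simp only [hpart]
    simpa using rlim.const_sub q

theorem greedy_type {P : Type} (e : P → ℕ) (he : Function.Injective e) (g : P → ℝ)
    (hg : ∀ p, 0 ≤ g p) (hs : Summable g)
    (ht : ∀ p, g p ≤ ∑' p', if e p < e p' then g p' else 0)
    (q : ℝ) (hq : 0 < q) (hqS : q ≤ ∑' p, g p) :
    ∃ B : Set P, {p | p ∈ B ∧ 0 < g p}.Infinite ∧ HasSum (B.indicator g) q := by
  set x : ℕ → ℝ := Function.extend e g 0 with hxdef
  have xe : ∀ p, x (e p) = g p := fun p => he.extend_apply g 0 p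
  have xn : ∀ i, i ∉ Set.range e → x i = 0 := by
    intro i hi
    rw [hxdef, Function.extend_apply' _ _ _ (by simpa using hi)]
    rfl
  have hx : ∀ i, 0 ≤ x i := by
    intro i
    by_cases hi : i ∈ Set.range e
    · obtain ⟨p, rfl⟩ := hi
      rw [xe]; exact hg p
    · rw [xn i hi]
  have hxs : Summable x := by
    rw [← he.summable_iff xn]
    simpa [Function.comp_def, xe] using hs
  have hsum : ∑' i, x i = ∑' p, g p := by
    rw [← he.tsum_eq (f := x)]
    · simp [xe]
    · intro i hi
      by_contra h
      exact hi (xn i h)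
  have htail : ∀ i, x i ≤ ∑' j, x (j + (i + 1)) := by
    intro i
    by_cases hi : i ∈ Set.range e
    · obtain ⟨p, rfl⟩ := hi
      rw [xe]
      refine (ht p).trans (le_of_eq ?_)
      have h1 : ∑' j, x (j + (e p + 1)) = ∑' i, if e p < i then x i else 0 := by
        have hinj : Function.Injective (fun j => j + (e p + 1)) := add_left_injective _
        rw [← hinj.tsum_eq (f := fun i => if e p < i then x i else 0)]
        · refine tsum_congr fun j => ?_
          rw [if_pos (by omega)]
        · intro i hi
          have : e p < i := by
            by_contra h
            exact hi (by simp [h])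
          exact ⟨i - (e p + 1), by simp only []; omega⟩
      rw [h1, ← he.tsum_eq (f := fun i => if e p < i then x i else 0)]
      · simp [xe]
      · intro i hi
        by_contra h
        exact hi (by simp [xn i h])
    · rw [xn i hi]
      exact tsum_nonneg fun j => hx _
  obtain ⟨B, hB1, hB2⟩ := greedy_seq x hx hxs htail q hq (hsum ▸ hqS)
  refine ⟨e ⁻¹' B, ?_, ?_⟩
  · intro hfin
    apply hB1
    refine (hfin.image e).subset ?_
    rintro i ⟨hi, hpos⟩
    by_cases h : i ∈ Set.range e
    · obtain ⟨p, rfl⟩ := h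
      exact ⟨p, ⟨hi, by rwa [xe] at hpos⟩, rfl⟩
    · rw [xn i h] at hpos
      exact absurd hpos (lt_irrefl _)
  · rw [← he.hasSum_iff (f := B.indicator x)] at hB2
    · convert hB2 using 1
      funext p
      simp [Set.indicator_apply, xe]
    · intro i hi
      simp [Set.indicator_apply, xn i hi]

theorem pow_sub_pos {t : ℕ} (ht : 2 ≤ t) (n : ℕ) : (0 : ℝ) < (t : ℝ) ^ (n + 1) - 1 := by
  have : (1 : ℝ) < (t : ℝ) ^ (n + 1) := one_lt_pow₀ (by exact_mod_cast ht) (by omega)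
  linarith

theorem summable_lambert {t : ℕ} (ht : 2 ≤ t) :
    Summable (fun n : ℕ => (1 : ℝ) / ((t : ℝ) ^ (n + 1) - 1)) := by
  have h2 : (2 : ℝ) ≤ t := by exact_mod_cast ht
  have hgeo : Summable (fun n : ℕ => ((1 : ℝ) / 2) ^ n) := summable_geometric_two
  refine Summable.of_nonneg_of_le (fun n => (one_div_pos.2 (pow_sub_pos ht n)).le) (fun n => ?_) hgeo
  rw [one_div_pow]
  apply one_div_le_one_div_of_le (by positivity)
  have h3 : (2 : ℝ) ^ (n + 1) ≤ (t : ℝ) ^ (n + 1) := pow_le_pow_left₀ (by norm_num) h2 _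
  have h4 : (1 : ℝ) ≤ 2 ^ n := one_le_pow₀ (by norm_num)
  rw [pow_succ] at h3
  linarith

theorem tail_bound {t : ℕ} (ht : 2 ≤ t) (X : ℕ) (hX : 1 ≤ X) :
    (1 : ℝ) / (t - 1) / X ≤
      ∑' n : ℕ, if X < t ^ (n + 1) then (1 : ℝ) / ((t : ℝ) ^ (n + 1) - 1) else 0 := by
  have h2 : (2 : ℝ) ≤ t := by exact_mod_cast ht
  have hX' : (1 : ℝ) ≤ X := by exact_mod_cast hX
  set a := Nat.log t X with ha
  have h3 : t ^ a ≤ X := Nat.pow_log_le_self t (by omega)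
  have h4 : X < t ^ (a + 1) := Nat.lt_pow_succ_log_self (by omega) X
  have hgeo : HasSum (fun i : ℕ => ((t : ℝ)⁻¹) ^ (a + 1) * ((t : ℝ)⁻¹) ^ i)
      (((t : ℝ)⁻¹) ^ (a + 1) * (1 - (t : ℝ)⁻¹)⁻¹) :=
    (hasSum_geometric_of_lt_one (by positivity) (inv_lt_one_of_one_lt₀ (by linarith))).mul_left _
  have hsm : Summable (fun n : ℕ => if X < t ^ (n + 1) then (1 : ℝ) / ((t : ℝ) ^ (n + 1) - 1) else 0) := by
    refine Summable.of_nonneg_of_le (fun n => ?_) (fun n => ?_) (summable_lambert ht)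
    · have := (one_div_pos.2 (pow_sub_pos ht n)).le
      split_ifs <;> simp_all
    · have := (one_div_pos.2 (pow_sub_pos ht n)).le
      split_ifs <;> simp_all
  have key : ((t : ℝ)⁻¹) ^ (a + 1) * (1 - (t : ℝ)⁻¹)⁻¹ ≤
      ∑' n : ℕ, if X < t ^ (n + 1) then (1 : ℝ) / ((t : ℝ) ^ (n + 1) - 1) else 0 := by
    refine hasSum_le_inj (fun i => a + i) (add_right_injective a) ?_ ?_ hgeo hsm.hasSum
    · intro c _
      have := (one_div_pos.2 (pow_sub_pos ht c)).le
      split_ifs <;> simp_all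
    · intro i
      have : X < t ^ (a + i + 1) :=
        h4.trans_le (Nat.pow_le_pow_right (by omega) (by omega))
      simp only [if_pos this]
      rw [← pow_add, inv_pow, ← one_div, show a + 1 + i = a + i + 1 by omega]
      exact one_div_le_one_div_of_le (pow_sub_pos ht _) (by linarith)
  refine le_trans ?_ key
  have h5 : ((t : ℝ)⁻¹) ^ (a + 1) * (1 - (t : ℝ)⁻¹)⁻¹ = 1 / (t - 1) / (t : ℝ) ^ a := by
    have : (t : ℝ) - 1 ≠ 0 := by linarith
    have h0 : (t : ℝ) ≠ 0 := by linarith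
    have : (1 : ℝ) - (t : ℝ)⁻¹ = (t - 1) / t := by field_simp
    rw [this, inv_pow, pow_succ]
    field_simp
  rw [h5]
  have h6 : (0 : ℝ) ≤ 1 / (t - 1) := by
    apply one_div_nonneg.2; linarith
  exact div_le_div_of_nonneg_left h6 (by positivity) (by exact_mod_cast h3)

set_option maxHeartbeats 1000000 in
/-- Merged Lambert subseries: if `2 ≤ t_1 < ⋯ < t_m` are integers with
`∑_k 1/(t_k - 1) > 1`, then there are sets `A_1, …, A_m` of positive integers,
at least one infinite, with `∑_k ∑_{n ∈ A_k} 1/(t_k^n - 1)` rational. -/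
theorem stmt_5 (m : ℕ) (hm : 0 < m) (t : Fin m → ℕ)
    (ht2 : ∀ k, 2 ≤ t k) (htmono : StrictMono t)
    (hbig : 1 < ∑ k : Fin m, (1 : ℝ) / (t k - 1)) :
    ∃ A : Fin m → Set ℕ,
      (∀ k, A k ⊆ {n | 1 ≤ n}) ∧ (∃ k, (A k).Infinite) ∧
      ∃ q : ℚ, (∑ k : Fin m, ∑' n : A k, (1 : ℝ) / ((t k) ^ (n : ℕ) - 1)) = q := by
  set σ := ∑ k : Fin m, (1 : ℝ) / (t k - 1) with hσ
  obtain ⟨N0, hN0⟩ := exists_nat_ge (σ / (σ - 1))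
  set L : Fin m × ℕ → ℝ := fun p => (1 : ℝ) / ((t p.1 : ℝ) ^ (p.2 + 1) - 1) with hL
  have Lpos : ∀ p, 0 < L p := fun p => one_div_pos.2 (pow_sub_pos (ht2 p.1) p.2)
  have Lsum : Summable L := by
    rw [summable_prod_of_nonneg (fun p => (Lpos p).le)]
    refine ⟨fun k => ?_, (hasSum_fintype _).summable⟩
    have h := summable_lambert (t := t k) (ht2 k)
    simp only [hL]
    exact h
  set g : Fin m × ℕ → ℝ := fun p => if N0 ≤ t p.1 ^ (p.2 + 1) then L p else 0 with hgdef
  have gnn : ∀ p, 0 ≤ g p := by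
    intro p
    simp only [hgdef]
    split_ifs
    · exact (Lpos p).le
    · exact le_rfl
  have gle : ∀ p, g p ≤ L p := by
    intro p
    simp only [hgdef]
    split_ifs
    · exact le_rfl
    · exact (Lpos p).le
  have gsum : Summable g := Summable.of_nonneg_of_le gnn gle Lsum
  set e : Fin m × ℕ → ℕ := fun p => m * t p.1 ^ (p.2 + 1) + p.1 with hedef
  have elt : ∀ p p' : Fin m × ℕ, t p.1 ^ (p.2 + 1) < t p'.1 ^ (p'.2 + 1) → e p < e p' := by
    intro p p' h
    have h1 := Nat.mul_le_mul_left m (Nat.succ_le_of_lt h)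
    rw [Nat.succ_eq_add_one, mul_add] at h1
    have h2 := p.1.2
    simp only [hedef]
    omega
  have einj : Function.Injective e := by
    rintro ⟨k, n⟩ ⟨k', n'⟩ h
    have h1 : t k ^ (n + 1) = t k' ^ (n' + 1) := by
      rcases lt_trichotomy (t k ^ (n + 1)) (t k' ^ (n' + 1)) with h2 | h2 | h2
      · exact absurd h (elt (k, n) (k', n') h2).ne
      · exact h2
      · exact absurd h (elt (k', n') (k, n) h2).ne'
    have h3 : k = k' := by
      simp only [hedef, h1] at h
      ext
      omega
    subst h3
    have h4 := Nat.pow_right_injective (ht2 k) h1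
    simp only [Prod.mk.injEq, true_and]
    omega
  have htail : ∀ p, g p ≤ ∑' p', if e p < e p' then g p' else 0 := by
    intro p
    by_cases hp : N0 ≤ t p.1 ^ (p.2 + 1)
    · set X := t p.1 ^ (p.2 + 1) with hX
      have hX1 : 1 ≤ X := Nat.one_le_pow _ _ (by have := ht2 p.1; omega)
      have hXpos := pow_sub_pos (ht2 p.1) p.2
      have hXc : (X : ℝ) = (t p.1 : ℝ) ^ (p.2 + 1) := by simp [hX]
      set h : Fin m × ℕ → ℝ := fun p' => if X < t p'.1 ^ (p'.2 + 1) then L p' else 0 with hh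
      have hnn : ∀ p', 0 ≤ h p' := by
        intro p'
        simp only [hh]
        split_ifs
        · exact (Lpos p').le
        · exact le_rfl
      have hle : ∀ p', h p' ≤ L p' := by
        intro p'
        simp only [hh]
        split_ifs
        · exact le_rfl
        · exact (Lpos p').le
      have hsum : Summable h := Summable.of_nonneg_of_le hnn hle Lsum
      have htsum : σ / X ≤ ∑' p', h p' := by
        rw [hsum.tsum_prod, tsum_fintype, hσ, Finset.sum_div]
        exact Finset.sum_le_sum fun k _ => tail_bound (ht2 k) X hX1
      have h1 : g p ≤ σ / X := by
        simp only [hgdef]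
        rw [if_pos hp]
        simp only [hL]
        rw [← hXc] at hXpos ⊢
        have h5 : σ / (σ - 1) ≤ X := hN0.trans (by exact_mod_cast hp)
        rw [div_le_iff₀ (by linarith)] at h5
        rw [div_le_div_iff₀ hXpos (by linarith)]
        linarith
      refine h1.trans (htsum.trans ?_)
      refine hsum.tsum_le_tsum (fun p' => ?_) ?_
      · simp only [hh]
        split_ifs with h6 h7 h7
        · simp only [hgdef]
          rw [if_pos (by omega)]
        · exact absurd (elt p p' h6) h7
        · exact gnn p'
        · exact le_rfl
      · refine Summable.of_nonneg_of_le (fun p' => ?_) (fun p' => ?_) gsum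
        · split_ifs
          · exact gnn p'
          · exact le_rfl
        · split_ifs
          · exact le_rfl
          · exact gnn p'
    · have : g p = 0 := by simp only [hgdef]; rw [if_neg hp]
      rw [this]
      refine tsum_nonneg fun p' => ?_
      split_ifs
      · exact gnn p'
      · exact le_rfl
  have Spos : 0 < ∑' p, g p := by
    refine gsum.tsum_pos gnn (⟨0, hm⟩, N0) ?_
    have : N0 ≤ t ⟨0, hm⟩ ^ (N0 + 1) := by
      have h1 := Nat.lt_pow_self (n := N0 + 1) (show 1 < t ⟨0, hm⟩ from ht2 _)
      omega
    simp only [hgdef]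
    rw [if_pos this]
    exact Lpos _
  obtain ⟨q, hq0, hqS⟩ := exists_rat_btwn Spos
  obtain ⟨B, hB1, hB2⟩ := greedy_type e einj g gnn gsum htail q hq0 hqS.le
  set C : Set (Fin m × ℕ) := {p | p ∈ B ∧ 0 < g p} with hC
  have hCL : B.indicator g = C.indicator L := by
    funext p
    simp only [Set.indicator_apply, hC, Set.mem_ofPred_eq]
    by_cases hpB : p ∈ B
    · by_cases hp : N0 ≤ t p.1 ^ (p.2 + 1)
      · have : g p = L p := by simp only [hgdef]; rw [if_pos hp]
        simp [hpB, this, Lpos p]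
      · have : g p = 0 := by simp only [hgdef]; rw [if_neg hp]
        simp [this]
    · simp [hpB]
  rw [hCL] at hB2
  refine ⟨fun k => (fun n => n + 1) '' {n | (k, n) ∈ C}, ?_, ?_, q, ?_⟩
  · rintro k _ ⟨n, _, rfl⟩
    simp
  · by_contra hcon
    push Not at hcon
    apply hB1
    have hfin : ∀ k, {n | (k, n) ∈ C}.Finite := fun k =>
      (Set.finite_image_iff (add_left_injective 1).injOn).1 (Set.not_infinite.1 (by simpa using hcon k))
    refine (Set.finite_iUnion fun k => (hfin k).image (fun n => (k, n))).subset ?_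
    rintro ⟨k, n⟩ h
    exact Set.mem_iUnion.2 ⟨k, n, h, rfl⟩
  · rw [← hB2.tsum_eq, hB2.summable.tsum_prod, tsum_fintype]
    refine Finset.sum_congr rfl fun k _ => ?_
    rw [tsum_image (fun n : ℕ => (1 : ℝ) / ((t k : ℝ) ^ n - 1)) (add_left_injective 1).injOn,
      tsum_subtype {n | (k, n) ∈ C} (fun n : ℕ => (1 : ℝ) / ((t k : ℝ) ^ (n + 1) - 1))]
    refine tsum_congr fun n => ?_
    simp [Set.indicator_apply, hL]
end

section
/- For every positive integer d there exist a real β > 1 and a strictly increasing sequence of positive integers (a_k) such that lim_{k→∞} a_k^{1/β^k} = ∞ and ∑_{k=1}^∞ 1/(a_k + j) is a rational number for every j ∈ {0, 1, …, d−1}. -/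
open Filter

namespace AhmesAux

/-- The local inversion of power sums near `1/(i+1)`. -/
lemma powersum_open (d : ℕ) :
    ∃ r : ℝ, 0 < r ∧ ∃ y0 : Fin d → ℝ, ∀ y : Fin d → ℝ, (∀ j, |y j - y0 j| ≤ r) →
      ∃ x : Fin d → ℝ, (∀ i, |x i - ((i : ℕ) + 1 : ℝ)| < 1 / 4) ∧
        ∀ j : Fin d, ∑ i, (1 / x i) ^ ((j : ℕ) + 1) = y j := by
  classical
  let G : (Fin d → ℝ) → (Fin d → ℝ) := fun u j => ∑ i, (u i) ^ ((j : ℕ) + 1)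
  let u0 : Fin d → ℝ := fun i => 1 / ((i : ℕ) + 1 : ℝ)
  let G' : (Fin d → ℝ) →L[ℝ] (Fin d → ℝ) := ContinuousLinearMap.pi fun j =>
    ∑ i, ((((j : ℕ) + 1 : ℕ) : ℝ) * (u0 i) ^ (j : ℕ)) • ContinuousLinearMap.proj (R := ℝ) i
  have hG : HasStrictFDerivAt G G' u0 := by
    rw [hasStrictFDerivAt_pi']
    intro j
    have : HasStrictFDerivAt (fun u : Fin d → ℝ => ∑ i, (u i) ^ ((j : ℕ) + 1))
        (∑ i, ((((j : ℕ) + 1 : ℕ) : ℝ) * (u0 i) ^ (j : ℕ)) •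
          ContinuousLinearMap.proj (R := ℝ) (φ := fun _ : Fin d => ℝ) i) u0 := by
      apply HasStrictFDerivAt.fun_sum
      intro i _
      have h1 := (hasStrictDerivAt_pow ((j : ℕ) + 1) (u0 i))
      have h2 : HasStrictFDerivAt (fun u : Fin d → ℝ => u i)
        (ContinuousLinearMap.proj (R := ℝ) (φ := fun _ : Fin d => ℝ) i) u0 :=
        (ContinuousLinearMap.proj (R := ℝ) (φ := fun _ : Fin d => ℝ) i).hasStrictFDerivAt
      exact h1.comp_hasStrictFDerivAt u0 h2
    exact this
  have hu0 : Function.Injective u0 := by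
    intro i k h
    have h' : ((i : ℕ) + 1 : ℝ) = ((k : ℕ) + 1 : ℝ) := by
      have := congrArg (fun t : ℝ => 1 / t) h
      simpa [u0] using this
    ext
    exact_mod_cast (add_right_cancel h' : ((i : ℕ) : ℝ) = (k : ℕ))
  have hsurj : Function.Surjective G' := by
    have hdet : IsUnit (Matrix.vandermonde u0) := by
      rw [Matrix.isUnit_iff_isUnit_det, isUnit_iff_ne_zero]
      exact Matrix.det_vandermonde_ne_zero_iff.mpr hu0
    have hs := (Matrix.vecMul_surjective_iff_isUnit (A := Matrix.vandermonde u0)).mpr hdet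
    intro y
    obtain ⟨v, hv⟩ := hs (fun j => y j / (((j : ℕ) + 1 : ℕ) : ℝ))
    refine ⟨v, ?_⟩
    funext j
    have hj := congrFun hv j
    simp only [Matrix.vecMul, dotProduct, Matrix.vandermonde_apply] at hj
    have hne : (((j : ℕ) + 1 : ℕ) : ℝ) ≠ 0 := by positivity
    rw [eq_div_iff hne, Finset.sum_mul] at hj
    simp only [G', ContinuousLinearMap.coe_pi', _root_.sum_apply,
      _root_.smul_apply, ContinuousLinearMap.proj_apply, smul_eq_mul]
    rw [← hj]
    apply Finset.sum_congr rfl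
    intro i _
    ring
  have hmap := hG.map_nhds_eq_of_surj (LinearMap.range_eq_top.mpr hsurj)
  have hU : {u : Fin d → ℝ | ∀ i, |1 / u i - ((i : ℕ) + 1 : ℝ)| < 1 / 4} ∈ nhds u0 := by
    have : ∀ i, ∀ᶠ u : Fin d → ℝ in nhds u0, |1 / u i - ((i : ℕ) + 1 : ℝ)| < 1 / 4 := by
      intro i
      have hc : ContinuousAt (fun u : Fin d → ℝ => |1 / u i - ((i : ℕ) + 1 : ℝ)|) u0 := by
        have : u0 i ≠ 0 := by simp only [u0]; positivity
        exact ((continuousAt_const.div (continuousAt_apply i u0) this).sub continuousAt_const).abs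
      have h0 : |1 / u0 i - ((i : ℕ) + 1 : ℝ)| < 1 / 4 := by
        simp [u0]
      exact hc.eventually_lt continuousAt_const h0
    exact eventually_all.mpr this
  have himg : G '' {u : Fin d → ℝ | ∀ i, |1 / u i - ((i : ℕ) + 1 : ℝ)| < 1 / 4} ∈ nhds (G u0) := by
    rw [← hmap]
    exact image_mem_map hU
  obtain ⟨r, hr, hball⟩ := Metric.nhds_basis_closedBall.mem_iff.mp himg
  refine ⟨r, hr, G u0, ?_⟩
  intro y hy
  have : y ∈ Metric.closedBall (G u0) r := by
    rw [Metric.mem_closedBall, dist_pi_le_iff hr.le]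
    intro j
    rw [Real.dist_eq]
    exact hy j
  obtain ⟨u, hu, rfl⟩ := hball this
  refine ⟨fun i => 1 / u i, hu, ?_⟩
  intro j
  simp [G]

/-- `g j n = 1/(n(n+1)...(n+j))`. -/
noncomputable def g (j n : ℕ) : ℝ := ∏ i ∈ Finset.range (j + 1), (1 / ((n : ℝ) + i))

lemma g_nonneg (j n : ℕ) : 0 ≤ g j n := Finset.prod_nonneg fun i _ => by positivity

lemma prod_close (A : ℕ → ℝ) (b δ : ℝ) (hb : 0 ≤ b) (hb2 : b ≤ 2) (m : ℕ)
    (hA0 : ∀ i < m, 0 ≤ A i) (hA2 : ∀ i < m, A i ≤ 2) (hA : ∀ i < m, |A i - b| ≤ δ) :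
    |∏ i ∈ Finset.range m, A i - b ^ m| ≤ m * 2 ^ m * δ ∧
      0 ≤ ∏ i ∈ Finset.range m, A i ∧ ∏ i ∈ Finset.range m, A i ≤ 2 ^ m := by
  induction m with
  | zero => simp
  | succ m ih =>
    obtain ⟨h1, h2, h3⟩ := ih (fun i hi => hA0 i (by omega)) (fun i hi => hA2 i (by omega))
      (fun i hi => hA i (by omega))
    have a0 := hA0 m (by omega)
    have a2 := hA2 m (by omega)
    have a := hA m (by omega)
    have hδ : 0 ≤ δ := (abs_nonneg _).trans a
    rw [Finset.prod_range_succ]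
    set P := ∏ i ∈ Finset.range m, A i
    refine ⟨?_, by positivity, ?_⟩
    · have e : P * A m - b ^ (m + 1) = P * (A m - b) + b * (P - b ^ m) := by ring
      rw [e]
      refine (abs_add_le _ _).trans ?_
      rw [abs_mul, abs_mul, abs_of_nonneg h2, abs_of_nonneg hb]
      have i1 : P * |A m - b| ≤ 2 ^ m * δ := by gcongr
      have i2 : b * |P - b ^ m| ≤ 2 * (m * 2 ^ m * δ) := by gcongr
      have i3 : 0 ≤ 2 ^ m * δ := by positivity
      push_cast
      rw [pow_succ]
      nlinarith
    · rw [pow_succ]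
      gcongr

lemma round_one (d : ℕ) (N x : ℝ) (hN : 4 ≤ N) (hx : 3 / 4 ≤ x) (j : ℕ) (hj : j < d) :
    |N ^ (j + 1) * g j ⌊N * x⌋₊ - (1 / x) ^ (j + 1)| ≤ d * 2 ^ d * (4 * (d + 1)) / N := by
  have hNx : 0 ≤ N * x := by positivity
  set n := ⌊N * x⌋₊ with hn
  have h1 : (n : ℝ) ≤ N * x := Nat.floor_le hNx
  have h2 : N * x < n + 1 := Nat.lt_floor_add_one _
  have h3 : N / 2 ≤ n := by nlinarith
  have hx0 : 0 < x := by linarith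
  have hN0 : 0 < N := by linarith
  have e : N ^ (j + 1) * g j n = ∏ i ∈ Finset.range (j + 1), (N / ((n : ℝ) + i)) := by
    rw [g, ← Finset.card_range (j + 1), ← Finset.prod_const, Finset.card_range,
      ← Finset.prod_mul_distrib]
    apply Finset.prod_congr rfl
    intro i _
    ring
  rw [e]
  have key := (prod_close (fun i => N / ((n : ℝ) + i)) (1 / x) ((4 * (d + 1)) / N) (by positivity)
    (by rw [div_le_iff₀ hx0]; linarith) (j + 1) (fun i _ => by positivity)
    (fun i _ => by
      have : (0 : ℝ) ≤ i := by positivity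
      rw [div_le_iff₀ (by linarith)]; linarith)
    (fun i hi => by
      have hi0 : (0 : ℝ) ≤ i := by positivity
      have hid : (i : ℝ) ≤ d := by exact_mod_cast (by omega : i ≤ d)
      have hpos : 0 < (n : ℝ) + i := by linarith
      have e2 : N / ((n : ℝ) + i) - 1 / x = (N * x - n - i) / (((n : ℝ) + i) * x) := by
        field_simp
        ring
      rw [e2, abs_div, abs_of_pos (mul_pos hpos hx0), div_le_div_iff₀ (mul_pos hpos hx0) hN0]
      have hab : |N * x - n - i| ≤ d + 1 := by
        rw [abs_le]; constructor <;> linarith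
      have hden : N ≤ 4 * (((n : ℝ) + i) * x) := by nlinarith
      calc |N * x - n - i| * N ≤ (d + 1) * (4 * (((n : ℝ) + i) * x)) := by gcongr
        _ = _ := by ring)).1
  refine key.trans ?_
  have hjd : j + 1 ≤ d := hj
  have : ((j + 1 : ℕ) : ℝ) ≤ d := by exact_mod_cast hjd
  have h2p : (2 : ℝ) ^ (j + 1) ≤ 2 ^ d := pow_le_pow_right₀ (by norm_num) hjd
  rw [mul_div_assoc ((d : ℝ) * 2 ^ d)]
  have hE : 0 ≤ 4 * ((d : ℝ) + 1) / N := by positivity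
  exact mul_le_mul_of_nonneg_right (mul_le_mul this h2p (by positivity) (by positivity)) hE

lemma step_exists (d : ℕ) :
    ∃ r : ℝ, 0 < r ∧ ∃ C : ℝ, 0 ≤ C ∧ ∃ y0 : Fin d → ℝ, ∀ N : ℝ, 4 ≤ N → ∀ y : Fin d → ℝ,
      (∀ j, |y j - y0 j| ≤ r) →
      ∃ n : Fin d → ℕ, (∀ i : Fin d, ((i : ℕ) + 1 / 2 : ℝ) * N ≤ n i ∧ (n i : ℝ) ≤ ((i : ℕ) + 5 / 4) * N) ∧
        ∀ j : Fin d, |N ^ ((j : ℕ) + 1) * ∑ i, g j (n i) - y j| ≤ C / N := by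
  obtain ⟨r, hr, y0, h⟩ := powersum_open d
  refine ⟨r, hr, d * (d * 2 ^ d * (4 * (d + 1))), by positivity, y0, ?_⟩
  intro N hN y hy
  obtain ⟨x, hx, hxy⟩ := h y hy
  have hN0 : 0 < N := by linarith
  have hxl : ∀ i : Fin d, ((i : ℕ) : ℝ) + 3 / 4 ≤ x i ∧ x i ≤ ((i : ℕ) : ℝ) + 5 / 4 := by
    intro i
    have := abs_lt.mp (hx i)
    constructor <;> linarith [this.1, this.2]
  have hx34 : ∀ i, 3 / 4 ≤ x i := fun i => by
    have := (hxl i).1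
    have : (0 : ℝ) ≤ (i : ℕ) := by positivity
    linarith
  refine ⟨fun i => ⌊N * x i⌋₊, ?_, ?_⟩
  · intro i
    have h0 : 0 ≤ N * x i := mul_nonneg hN0.le (by linarith [hx34 i])
    have h1 := Nat.floor_le h0
    have h2 := Nat.lt_floor_add_one (N * x i)
    have h3 := mul_le_mul_of_nonneg_left (hxl i).1 hN0.le
    have h4 := mul_le_mul_of_nonneg_left (hxl i).2 hN0.le
    constructor
    · nlinarith
    · nlinarith
  · intro j
    rw [← hxy j, Finset.mul_sum, ← Finset.sum_sub_distrib]
    refine (Finset.abs_sum_le_sum_abs _ _).trans ?_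
    refine (Finset.sum_le_sum (fun i _ => round_one d N (x i) hN (hx34 i) j j.2)).trans ?_
    simp only [Finset.sum_const, Finset.card_univ, Fintype.card_fin, nsmul_eq_mul]
    exact (mul_div_assoc _ _ _).ge

/-- Flatten blocks of length `d`. -/
lemma sum_blocks (d : ℕ) (hd : 0 < d) (b : ℕ → Fin d → ℕ) (f : ℕ → ℝ) (m : ℕ) :
    ∑ k ∈ Finset.range (d * m), f (b (k / d) ⟨k % d, Nat.mod_lt _ hd⟩)
      = ∑ l ∈ Finset.range m, ∑ i, f (b l i) := by
  induction m with
  | zero => simp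
  | succ m ih =>
    rw [Nat.mul_succ, Finset.sum_range_add, ih, Finset.sum_range_succ]
    congr 1
    rw [Finset.sum_range]
    apply Finset.sum_congr rfl
    intro i _
    have h1 : (d * m + (i : ℕ)) / d = m := by
      rw [Nat.mul_add_div hd, Nat.div_eq_of_lt i.2, add_zero]
    have h2 : (d * m + (i : ℕ)) % d = i := by
      rw [Nat.mul_add_mod, Nat.mod_eq_of_lt i.2]
    congr 2
    ext; exact h2

/-- The iteration. -/
lemma core (d : ℕ) (r C : ℝ) (hr : 0 < r) (y0 : Fin d → ℝ)
    (hstep : ∀ N : ℝ, 4 ≤ N → ∀ y : Fin d → ℝ,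
      (∀ j, |y j - y0 j| ≤ r) →
      ∃ n : Fin d → ℕ, (∀ i : Fin d, ((i : ℕ) + 1 / 2 : ℝ) * N ≤ n i ∧ (n i : ℝ) ≤ ((i : ℕ) + 5 / 4) * N) ∧
        ∀ j : Fin d, |N ^ ((j : ℕ) + 1) * ∑ i, g j (n i) - y j| ≤ C / N)
    (N : ℕ → ℝ) (hN4 : ∀ m, 4 ≤ N m) (hN2 : ∀ m, 2 ^ m ≤ N m)
    (hNC : ∀ m, ∀ j : Fin d, N (m + 1) ^ ((j : ℕ) + 1) * (C / N m ^ ((j : ℕ) + 2)) ≤ r) :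
    ∃ b : ℕ → Fin d → ℕ,
      (∀ m (i : Fin d), ((i : ℕ) + 1 / 2 : ℝ) * N m ≤ b m i ∧ (b m i : ℝ) ≤ ((i : ℕ) + 5 / 4) * N m) ∧
      ∀ j : Fin d, ∃ T : ℚ,
        Tendsto (fun m => ∑ l ∈ Finset.range m, ∑ i, g j (b l i)) atTop (nhds (T : ℝ)) := by
  have hNpos : ∀ m, 0 < N m := fun m => by linarith [hN4 m]
  have hinv : ∀ m (j : ℕ), 1 / N m ^ (j + 1) ≤ (1 / 2) ^ m := by
    intro m j
    rw [one_div_pow]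
    apply one_div_le_one_div_of_le (by positivity)
    calc (2 : ℝ) ^ m ≤ N m := hN2 m
      _ ≤ N m ^ (j + 1) := le_self_pow₀ (by linarith [hN4 m]) (by omega)
  have hsum : ∀ j : ℕ, Summable (fun m => 1 / N m ^ (j + 1)) := fun j =>
    Summable.of_nonneg_of_le (fun m => by have := hNpos m; positivity) (fun m => hinv m j)
      summable_geometric_two
  have hstep' : ∀ M : ℝ, ∀ D : Fin d → ℝ, ∃ n : Fin d → ℕ,
      4 ≤ M → (∀ j : Fin d, |M ^ ((j : ℕ) + 1) * D j| ≤ r) →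
      (∀ i : Fin d, ((i : ℕ) + 1 / 2 : ℝ) * M ≤ n i ∧ (n i : ℝ) ≤ ((i : ℕ) + 5 / 4) * M) ∧
        ∀ j : Fin d, |M ^ ((j : ℕ) + 1) * ∑ i, g j (n i) - (y0 j + M ^ ((j : ℕ) + 1) * D j)|
          ≤ C / M := by
    intro M D
    by_cases h : 4 ≤ M ∧ (∀ j : Fin d, |M ^ ((j : ℕ) + 1) * D j| ≤ r)
    · obtain ⟨n, hn⟩ := hstep M h.1 (fun j => y0 j + M ^ ((j : ℕ) + 1) * D j)
        (fun j => by simpa using h.2 j)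
      exact ⟨n, fun _ _ => hn⟩
    · exact ⟨fun _ => 0, fun h1 h2 => absurd ⟨h1, h2⟩ h⟩
  choose ν hν using hstep'
  have hT : ∀ j : Fin d, ∃ T : ℚ,
      |y0 j * (∑' m, 1 / N m ^ ((j : ℕ) + 1)) - T| < r / N 0 ^ ((j : ℕ) + 1) := by
    intro j
    apply exists_rat_near
    have := hNpos 0
    positivity
  choose T hT using hT
  let D : ℕ → Fin d → ℝ := fun m => Nat.rec
    (fun j => (T j : ℝ) - y0 j * (∑' m, 1 / N m ^ ((j : ℕ) + 1)))
    (fun m D => fun j => D j + y0 j * (1 / N m ^ ((j : ℕ) + 1)) - ∑ i, g j (ν (N m) D i)) m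
  have hD0 : ∀ j, D 0 j = (T j : ℝ) - y0 j * (∑' m, 1 / N m ^ ((j : ℕ) + 1)) := fun j => rfl
  have hDs : ∀ m j, D (m + 1) j = D m j + y0 j * (1 / N m ^ ((j : ℕ) + 1))
      - ∑ i, g j (ν (N m) (D m) i) := fun m j => rfl
  have hinvt : ∀ m, ∀ j : Fin d, |N m ^ ((j : ℕ) + 1) * D m j| ≤ r := by
    intro m
    induction m with
    | zero =>
      intro j
      have hp : 0 < N 0 ^ ((j : ℕ) + 1) := pow_pos (hNpos 0) _
      rw [abs_mul, abs_of_pos hp, hD0, abs_sub_comm]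
      have := (lt_div_iff₀ hp).mp (hT j)
      linarith
    | succ m ih =>
      intro j
      have h := (hν (N m) (D m) (hN4 m) ih).2 j
      have hm := hNpos m
      have hp : 0 < N m ^ ((j : ℕ) + 1) := pow_pos hm _
      have hp' : 0 < N (m + 1) ^ ((j : ℕ) + 1) := pow_pos (hNpos (m + 1)) _
      have e : N m ^ ((j : ℕ) + 1) * ∑ i, g j (ν (N m) (D m) i)
          - (y0 j + N m ^ ((j : ℕ) + 1) * D m j) = - (N m ^ ((j : ℕ) + 1) * D (m + 1) j) := by
        rw [hDs]
        field_simp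
        ring
      rw [e, abs_neg, abs_mul, abs_of_pos hp] at h
      have h' : |D (m + 1) j| ≤ C / N m ^ ((j : ℕ) + 2) := by
        rw [le_div_iff₀ (pow_pos hm _)]
        rw [le_div_iff₀ hm] at h
        calc _ = N m ^ ((j : ℕ) + 1) * |D (m + 1) j| * N m := by ring
          _ ≤ C := h
      rw [abs_mul, abs_of_pos hp']
      exact (mul_le_mul_of_nonneg_left h' hp'.le).trans (hNC m j)
  refine ⟨fun m => ν (N m) (D m), fun m => (hν (N m) (D m) (hN4 m) (hinvt m)).1, ?_⟩
  intro j
  refine ⟨T j, ?_⟩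
  have hps : ∀ m, ∑ l ∈ Finset.range m, ∑ i, g j (ν (N l) (D l) i)
      = D 0 j - D m j + y0 j * ∑ l ∈ Finset.range m, 1 / N l ^ ((j : ℕ) + 1) := by
    intro m
    induction m with
    | zero => simp
    | succ m ih =>
      rw [Finset.sum_range_succ, ih, Finset.sum_range_succ, hDs m j]
      ring
  have hDt : Tendsto (fun m => D m j) atTop (nhds 0) := by
    have ht : Tendsto (fun m : ℕ => r * (1 / 2 : ℝ) ^ m) atTop (nhds 0) := by
      have := (tendsto_pow_atTop_nhds_zero_of_lt_one (r := (1 / 2 : ℝ)) (by norm_num)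
        (by norm_num)).const_mul r
      simpa using this
    apply squeeze_zero_norm _ ht
    intro m
    have hp : 0 < N m ^ ((j : ℕ) + 1) := pow_pos (hNpos m) _
    have h := hinvt m j
    rw [abs_mul, abs_of_pos hp] at h
    rw [Real.norm_eq_abs]
    calc |D m j| = (N m ^ ((j : ℕ) + 1) * |D m j|) * (1 / N m ^ ((j : ℕ) + 1)) := by field_simp
      _ ≤ r * (1 / 2) ^ m := mul_le_mul h (hinv m j) (by positivity) hr.le
  have hlim := (hDt.const_sub (D 0 j)).add
    (((hsum (j : ℕ)).hasSum.tendsto_sum_nat).const_mul (y0 j))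
  simp only [hps]
  convert hlim using 2
  rw [hD0]
  ring

lemma hasSum_of_blocks (d : ℕ) (hd : 0 < d) (f : ℕ → ℝ) (hf : ∀ k, 0 ≤ f k) (T : ℝ)
    (h : Tendsto (fun m => ∑ k ∈ Finset.range (d * m), f k) atTop (nhds T)) : HasSum f T := by
  rw [hasSum_iff_tendsto_nat_of_nonneg hf]
  have hmono : Monotone (fun n => ∑ k ∈ Finset.range n, f k) := fun a b hab =>
    Finset.sum_le_sum_of_subset_of_nonneg (Finset.range_mono hab) (fun i _ _ => hf i)
  exact (tendsto_iff_tendsto_subseq_of_monotone hmono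
    (tendsto_id.const_mul_atTop' hd)).mpr h

lemma rational_sums (d : ℕ) (a : ℕ → ℕ) (ha : ∀ k, 0 < a k)
    (h : ∀ j < d, ∃ T : ℚ, HasSum (fun k => g j (a k)) (T : ℝ)) (j : ℕ) :
    ∀ i, i + j < d → ∃ T : ℚ, HasSum (fun k =>
      (∏ l ∈ Finset.range i, (1 / ((a k : ℝ) + l))) * (1 / ((a k : ℝ) + (i + j : ℕ)))) (T : ℝ) := by
  induction j with
  | zero =>
    intro i hi
    obtain ⟨T, hT⟩ := h i hi
    refine ⟨T, ?_⟩
    convert hT using 2 with k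
    rw [g, Finset.prod_range_succ, add_zero]
  | succ j ih =>
    intro i hi
    obtain ⟨T1, hT1⟩ := h i (by omega)
    obtain ⟨T2, hT2⟩ := ih (i + 1) (by omega)
    refine ⟨T1 - (j + 1) * T2, ?_⟩
    have := hT1.sub (hT2.mul_left ((j : ℝ) + 1))
    push_cast
    refine Eq.mp (congrArg (fun F : ℕ → ℝ => HasSum F _) ?_) this
    funext k
    symm
    have hk : (0 : ℝ) < a k := by exact_mod_cast ha k
    rw [g, Finset.prod_range_succ]
    set P := ∏ l ∈ Finset.range i, (1 / ((a k : ℝ) + l))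
    have h1 : (a k : ℝ) + i ≠ 0 := by positivity
    have h2 : (a k : ℝ) + (i + (j + 1)) ≠ 0 := by positivity
    have h3 : (a k : ℝ) + (i + 1 + j) ≠ 0 := by positivity
    push_cast
    have e : (a k : ℝ) + (i + 1 + j) = (a k : ℝ) + (i + (j + 1)) := by ring
    rw [e]
    field_simp
    ring

end AhmesAux

open AhmesAux in
/-- For every `d` there exist `β > 1` and a strictly increasing sequence of
positive integers `(a_k)` with `a_k^{1/β^k} → ∞` such that all the sums
`∑_k 1/(a_k + j)`, `j = 0, …, d-1`, are rational. -/
theorem stmt_15 (d : ℕ) (hd : 0 < d) :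
    ∃ β : ℝ, 1 < β ∧ ∃ a : ℕ → ℕ, StrictMono a ∧ (∀ k, 0 < a k) ∧
      Tendsto (fun k => (a k : ℝ) ^ ((1 : ℝ) / β ^ k)) atTop atTop ∧
      ∀ j : ℕ, j < d → ∃ q : ℚ, (∑' k : ℕ, (1 : ℝ) / (a k + j)) = q := by
  obtain ⟨r, hr, C, hC, y0, hstep⟩ := step_exists d
  have hd' : (0 : ℝ) < d := by exact_mod_cast hd
  -- choice of β and q = β^(2d)
  obtain ⟨β, hβ1, hβq⟩ : ∃ β : ℝ, 1 < β ∧ β ^ (2 * d) = 1 + 1 / (2 * d) := by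
    refine ⟨(1 + 1 / (2 * d) : ℝ) ^ ((1 : ℝ) / (2 * d : ℕ)), ?_, ?_⟩
    · apply Real.one_lt_rpow
      · have : (0 : ℝ) < 1 / (2 * d) := by positivity
        linarith
      · positivity
    · rw [one_div ((2 * d : ℕ) : ℝ)]
      exact Real.rpow_inv_natCast_pow (by positivity) (by omega)
  set q : ℝ := 1 + 1 / (2 * d) with hq
  have hq1 : 1 < q := by
    have : (0 : ℝ) < 1 / (2 * d) := by positivity
    linarith
  have hqpow : ∀ m : ℕ, 1 ≤ q ^ m := fun m => one_le_pow₀ hq1.le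
  -- choice of L
  obtain ⟨L, hL4, hL2, hLC, hLd⟩ : ∃ L : ℝ, 4 ≤ L ∧ 2 ≤ Real.exp (L * (q - 1)) ∧
      C * Real.exp (-(L / 2)) ≤ r ∧ 2 * (d + 2 : ℝ) ≤ Real.exp (L * (q - 1)) := by
    have t1 : Tendsto (fun L : ℝ => Real.exp (L * (q - 1))) atTop atTop :=
      Real.tendsto_exp_atTop.comp (tendsto_id.atTop_mul_const (by linarith))
    have t2 : Tendsto (fun L : ℝ => C * Real.exp (-(L / 2))) atTop (nhds 0) := by
      have := (Real.tendsto_exp_neg_atTop_nhds_zero.comp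
        (tendsto_id.atTop_div_const (by norm_num : (0 : ℝ) < 2))).const_mul C
      simpa using this
    obtain ⟨L, h⟩ := ((eventually_ge_atTop (4 : ℝ)).and ((t1.eventually_ge_atTop 2).and
      ((t2.eventually (ge_mem_nhds hr)).and (t1.eventually_ge_atTop (2 * (d + 2)))))).exists
    exact ⟨L, h.1, h.2.1, h.2.2.1, h.2.2.2⟩
  let N : ℕ → ℝ := fun m => Real.exp (L * q ^ m)
  have hNpos : ∀ m, 0 < N m := fun m => Real.exp_pos _
  have hLq : ∀ m : ℕ, L ≤ L * q ^ m := fun m => le_mul_of_one_le_right (by linarith) (hqpow m)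
  have hN4 : ∀ m, 4 ≤ N m := fun m => by
    have := Real.add_one_le_exp (L * q ^ m)
    have := hLq m
    simp only [N]
    linarith
  have hratio : ∀ m, N m * Real.exp (L * (q - 1)) ≤ N (m + 1) := by
    intro m
    simp only [N]
    rw [← Real.exp_add, Real.exp_le_exp, pow_succ]
    have : L * (q - 1) ≤ L * q ^ m * (q - 1) :=
      mul_le_mul_of_nonneg_right (hLq m) (by linarith)
    nlinarith
  have hN2 : ∀ m, 2 ^ m ≤ N m := by
    intro m
    induction m with
    | zero => simpa using (by linarith [hN4 0] : (1 : ℝ) ≤ N 0)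
    | succ m ih =>
      rw [pow_succ]
      exact (mul_le_mul ih hL2 (by norm_num) (hNpos m).le).trans (hratio m)
  have hNC : ∀ m, ∀ j : Fin d,
      N (m + 1) ^ ((j : ℕ) + 1) * (C / N m ^ ((j : ℕ) + 2)) ≤ r := by
    intro m j
    have hjd : (((j : ℕ) : ℝ) + 1) ≤ d := by exact_mod_cast j.2
    have e : N (m + 1) ^ ((j : ℕ) + 1) * (C / N m ^ ((j : ℕ) + 2))
        = C * Real.exp (L * q ^ m * (q * (((j : ℕ) : ℝ) + 1) - (((j : ℕ) : ℝ) + 2))) := by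
      simp only [N]
      rw [← Real.exp_nat_mul, ← Real.exp_nat_mul, mul_div_left_comm, ← Real.exp_sub]
      congr 2
      push_cast
      ring
    rw [e]
    have h1 : q * (((j : ℕ) : ℝ) + 1) - (((j : ℕ) : ℝ) + 2) ≤ -(1 / 2) := by
      have : 1 / (2 * d) * (((j : ℕ) : ℝ) + 1) ≤ 1 / 2 := by
        rw [div_mul_eq_mul_div, div_le_div_iff₀ (by positivity) (by norm_num)]
        linarith
      rw [hq]
      linarith
    have h2 : L * q ^ m * (q * (((j : ℕ) : ℝ) + 1) - (((j : ℕ) : ℝ) + 2)) ≤ -(L / 2) := by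
      have h3 := mul_le_mul_of_nonneg_left h1 (by linarith [hLq m] : 0 ≤ L * q ^ m)
      linarith [hLq m]
    exact (mul_le_mul_of_nonneg_left (Real.exp_le_exp.mpr h2) hC).trans hLC
  obtain ⟨b, hb, hbT⟩ := core d r C hr y0 hstep N hN4 hN2 hNC
  let a : ℕ → ℕ := fun k => b (k / d) ⟨k % d, Nat.mod_lt _ hd⟩
  have haN : ∀ k, N (k / d) / 2 ≤ a k := by
    intro k
    have h := (hb (k / d) ⟨k % d, Nat.mod_lt _ hd⟩).1
    have h0 : (0 : ℝ) ≤ ((k % d : ℕ) : ℝ) := by positivity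
    have := mul_nonneg h0 (hNpos (k / d)).le
    simp only at h
    simp only [a]
    linarith
  have hapos : ∀ k, 0 < a k := by
    intro k
    have := haN k
    have h4 := hN4 (k / d)
    have : (0 : ℝ) < a k := by linarith
    exact_mod_cast this
  have hamono : StrictMono a := by
    apply strictMono_nat_of_lt_succ
    intro k
    have hl := (hb (k / d) ⟨k % d, Nat.mod_lt _ hd⟩).2
    have hNp := hNpos (k / d)
    simp only at hl
    have hmod : k % d < d := Nat.mod_lt _ hd
    have hdm := Nat.div_add_mod k d
    have goal : (a k : ℝ) < a (k + 1) := by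
      by_cases hc : k % d + 1 < d
      · have e1 : (k + 1) / d = k / d := by
          rw [← hdm, add_assoc, Nat.mul_add_div hd, Nat.div_eq_of_lt hc, hdm, add_zero]
        have e2 : (k + 1) % d = k % d + 1 := by
          conv_lhs => rw [← hdm, add_assoc, Nat.mul_add_mod, Nat.mod_eq_of_lt hc]
        have hu := (hb ((k + 1) / d) ⟨(k + 1) % d, Nat.mod_lt _ hd⟩).1
        simp only [e1, e2] at hu
        push_cast at hu
        simp only [a, e1, e2]
        nlinarith
      · have hc' : k % d + 1 = d := by omega
        have e1 : (k + 1) / d = k / d + 1 := by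
          conv_lhs => rw [← hdm, add_assoc, hc', Nat.mul_add_div hd, Nat.div_self hd]
        have hu := haN (k + 1)
        rw [e1] at hu
        have hrt := hratio (k / d)
        have hmd : ((k % d : ℕ) : ℝ) + 1 = d := by exact_mod_cast hc'
        have h5 := mul_le_mul_of_nonneg_left hLd hNp.le
        have : (a k : ℝ) ≤ (((k % d : ℕ) : ℝ) + 5 / 4) * N (k / d) := hl
        nlinarith
    exact_mod_cast goal
  refine ⟨β, hβ1, a, hamono, hapos, ?_, ?_⟩
  · -- growth
    have hβ0 : 0 < β := by linarith
    have hlow : ∀ k, Real.exp (L / 2 / β ^ d * (β ^ d) ^ (k / d)) ≤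
        (a k : ℝ) ^ ((1 : ℝ) / β ^ k) := by
      intro k
      have hak : (0 : ℝ) < a k := by exact_mod_cast hapos k
      rw [Real.rpow_def_of_pos hak, Real.exp_le_exp]
      have hlog : L * q ^ (k / d) / 2 ≤ Real.log (a k) := by
        rw [Real.le_log_iff_exp_le hak]
        refine le_trans ?_ (haN k)
        have e : N (k / d) = Real.exp (L * q ^ (k / d) / 2) * Real.exp (L * q ^ (k / d) / 2) := by
          rw [← Real.exp_add]; simp only [N]; congr 1; ring
        have h2 : 2 ≤ Real.exp (L * q ^ (k / d) / 2) := by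
          have := Real.add_one_le_exp (L * q ^ (k / d) / 2)
          have := hLq (k / d)
          linarith
        rw [e]
        nlinarith [Real.exp_pos (L * q ^ (k / d) / 2)]
      have hk : β ^ k ≤ (β ^ d) ^ (k / d) * β ^ d := by
        rw [← pow_mul, ← pow_add]
        apply pow_le_pow_right₀ hβ1.le
        have := Nat.div_add_mod k d
        have := Nat.mod_lt k hd
        omega
      have hqb : q ^ (k / d) = (β ^ d) ^ (k / d) * (β ^ d) ^ (k / d) := by
        rw [← hβq, ← mul_pow]; congr 1; rw [← pow_add]; congr 1; ring
      have hs : 0 < (β ^ d) ^ (k / d) := by positivity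
      have hbd : 0 < β ^ d := by positivity
      rw [mul_one_div, le_div_iff₀ (by positivity)]
      refine le_trans ?_ hlog
      rw [hqb]
      calc L / 2 / β ^ d * (β ^ d) ^ (k / d) * β ^ k
          ≤ L / 2 / β ^ d * (β ^ d) ^ (k / d) * ((β ^ d) ^ (k / d) * β ^ d) := by
            have : 0 ≤ L := by linarith
            gcongr
        _ = _ := by field_simp
    refine tendsto_atTop_mono hlow ?_
    apply Real.tendsto_exp_atTop.comp
    apply Tendsto.const_mul_atTop
    · have : 0 < L := by linarith
      positivity
    · exact (tendsto_pow_atTop_atTop_of_one_lt (one_lt_pow₀ hβ1 (by omega))).comp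
        (Nat.tendsto_div_const_atTop (by omega))
  · intro j hj
    have hS : ∀ j < d, ∃ T : ℚ, HasSum (fun k => g j (a k)) (T : ℝ) := by
      intro j hj
      obtain ⟨T, hT⟩ := hbT ⟨j, hj⟩
      refine ⟨T, hasSum_of_blocks d hd _ (fun k => g_nonneg _ _) _ ?_⟩
      have := fun m => sum_blocks d hd b (fun n => g j n) m
      simp only [a, this]
      exact hT
    obtain ⟨T, hT⟩ := rational_sums d a hapos hS j 0 (by omega)
    refine ⟨T, ?_⟩
    simpa using hT.tsum_eq
end

section
/- For every positive integer d, the set of points (∑_{n∈A} 1/n, ∑_{n∈A} 1/(n+1), …, ∑_{n∈A} 1/(n+d−1)) ∈ ℝ^d, taken over all infinite sets A ⊆ ℕ with ∑_{n∈A} 1/n < ∞, has non-empty interior in ℝ^d. -/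
open Filter Topology Finset

noncomputable def uu (k n : ℕ) : ℝ := ∏ i ∈ Finset.range (k + 1), ((n : ℝ) + i)⁻¹

lemma uu_nonneg (k n : ℕ) : 0 ≤ uu k n :=
  Finset.prod_nonneg (fun i _ => by positivity)

lemma uu_succ (k n : ℕ) (hn : 0 < n) :
    uu k n - uu k (n + 1) = (k + 1) * uu (k + 1) n := by
  have h1 : uu (k + 1) n = uu k n * ((n : ℝ) + (k + 1 : ℕ))⁻¹ := by
    unfold uu
    rw [Finset.prod_range_succ]
  have h2 : uu (k + 1) n = uu k (n + 1) * ((n : ℝ))⁻¹ := by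
    unfold uu
    rw [Finset.prod_range_succ']
    congr 1
    · apply Finset.prod_congr rfl
      intro i _
      push_cast
      ring
    · simp
  have hn' : (0 : ℝ) < n := by exact_mod_cast hn
  have e1 : uu k n = uu (k + 1) n * ((n : ℝ) + (k + 1)) := by
    rw [h1]; push_cast; field_simp
  have e2 : uu k (n + 1) = uu (k + 1) n * n := by
    rw [h2]; field_simp
  rw [e1, e2]; ring

lemma uu_sum (k : ℕ) : ∀ n : ℕ, 0 < n →
    ∑ i ∈ Finset.range (k + 1), (-1 : ℝ) ^ i * (k.choose i) * (1 / ((n : ℝ) + i))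
      = k.factorial * uu k n := by
  induction k with
  | zero => intro n hn; simp [uu]
  | succ k ih =>
    intro n hn
    have h1 := ih n hn
    have h2 := ih (n + 1) (by omega)
    have h3 := uu_succ k n hn
    have h4 : ((k + 1).factorial : ℝ) * uu (k + 1) n
        = k.factorial * uu k n - k.factorial * uu k (n + 1) := by
      rw [← mul_sub, h3, Nat.factorial_succ]; push_cast; ring
    rw [h4, ← h1, ← h2]
    have h5 : ∑ i ∈ Finset.range (k + 1), (-1 : ℝ) ^ i * (k.choose i) * (1 / ((n : ℝ) + i))
      = ∑ i ∈ Finset.range (k + 2), (-1 : ℝ) ^ i * (k.choose i) * (1 / ((n : ℝ) + i)) := by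
      rw [Finset.sum_range_succ _ (k + 1)]; simp
    rw [h5, Finset.sum_range_succ' _ (k + 1), Finset.sum_range_succ' _ (k + 1)]
    have h6 : ∀ a b c : ℝ, a + c - b = (a - b) + c := by intros; ring
    rw [h6, ← Finset.sum_sub_distrib]
    congr 1
    · apply Finset.sum_congr rfl
      intro i _
      rw [Nat.choose_succ_succ]
      push_cast
      rw [show (n : ℝ) + 1 + i = n + (i + 1) by ring]
      ring
    · simp

lemma uu_tendsto (k s r : ℕ) :
    Tendsto (fun N : ℕ => (N : ℝ) ^ (k + 1) * uu k ((s + 1) * N + r)) atTop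
      (𝓝 (((s : ℝ) + 1)⁻¹ ^ (k + 1))) := by
  have h : ∀ i : ℕ, Tendsto (fun N : ℕ => (N : ℝ) * ((((s + 1) * N + r : ℕ) : ℝ) + i)⁻¹) atTop
      (𝓝 (((s : ℝ) + 1)⁻¹)) := by
    intro i
    have h0 : Tendsto (fun N : ℕ => (((s : ℝ) + 1) + (r + i) / (N : ℝ))⁻¹) atTop
        (𝓝 (((s : ℝ) + 1 + 0)⁻¹)) := by
      apply Tendsto.inv₀
      · exact tendsto_const_nhds.add (tendsto_const_div_atTop_nhds_zero_nat _)
      · positivity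
    rw [add_zero] at h0
    refine h0.congr' ?_
    filter_upwards [eventually_gt_atTop 0] with N hN
    have hN' : (0 : ℝ) < N := by exact_mod_cast hN
    push_cast
    field_simp
    ring
  have h2 := tendsto_finsetProd (Finset.range (k + 1)) (fun i _ => h i)
  rw [Finset.prod_const, Finset.card_range] at h2
  refine h2.congr ?_
  intro N
  rw [Finset.prod_mul_distrib, Finset.prod_const, Finset.card_range]
  rfl

lemma gg_inv (d : ℕ) : ∃ H : Matrix (Fin d) (Fin d) ℝ, ∀ z : Fin d → ℝ, ∀ k : Fin d,
    z k = ∑ s : Fin d, (∑ l, H s l * z l) * (((s : ℕ) : ℝ) + 1)⁻¹ ^ ((k : ℕ) + 1) := by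
  let v : Fin d → ℝ := fun s => (((s : ℕ) : ℝ) + 1)⁻¹
  let G : Matrix (Fin d) (Fin d) ℝ := (Matrix.vandermonde v).transpose * Matrix.diagonal v
  have hG : IsUnit G.det := by
    rw [isUnit_iff_ne_zero, Matrix.det_mul, Matrix.det_transpose, Matrix.det_diagonal]
    apply mul_ne_zero
    · rw [Matrix.det_vandermonde_ne_zero_iff]
      intro a b hab
      have := inv_injective hab
      ext
      exact_mod_cast add_right_cancel this
    · apply Finset.prod_ne_zero_iff.2
      intro i _
      have : (0 : ℝ) < v i := by simp only [v]; positivity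
      exact this.ne'
  refine ⟨G⁻¹, fun z k => ?_⟩
  have h1 : G.mulVec (G⁻¹.mulVec z) = z := by
    rw [Matrix.mulVec_mulVec, Matrix.mul_nonsing_inv _ hG, Matrix.one_mulVec]
  have h2 := congrFun h1 k
  rw [← h2]
  conv_lhs => rw [Matrix.mulVec, dotProduct]
  apply Finset.sum_congr rfl
  intro s _
  have h3 : G k s = (((s : ℕ) : ℝ) + 1)⁻¹ ^ ((k : ℕ) + 1) := by
    simp only [G, Matrix.mul_diagonal, Matrix.transpose_apply, Matrix.vandermonde_apply, v]
    rw [pow_succ]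
  rw [h3, mul_comm]
  rfl

lemma step (d : ℕ) (hd : 0 < d) : ∃ (p : Fin d → ℝ) (N0 : ℕ), 0 < N0 ∧ ∀ N : ℕ, N0 ≤ N →
    ∀ z : Fin d → ℝ, (∀ k, |z k| ≤ ((d : ℝ) + 1) ^ (d + 1)) →
    ∃ F : Finset ℕ, F.Nonempty ∧ F ⊆ Finset.Ico N ((d + 1) * N) ∧
      ∀ k : Fin d, |z k + p k - (N : ℝ) ^ ((k : ℕ) + 1) * ∑ n ∈ F, uu k n| ≤ (d : ℝ) + 1 := by
  obtain ⟨H, hH⟩ := gg_inv d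
  obtain ⟨M, hM⟩ := exists_nat_ge (∑ s : Fin d, ∑ l, |H s l| * ((d : ℝ) + 1) ^ (d + 1))
  have hd' : (0 : ℝ) < d := by exact_mod_cast hd
  have hδ : (0 : ℝ) < 1 / (d * (2 * M + 1)) := by positivity
  have hev : ∀ᶠ N : ℕ in atTop, ∀ k : Fin d, ∀ s : Fin d, ∀ r : Fin (2 * M + 1),
      |(N : ℝ) ^ ((k : ℕ) + 1) * uu k ((s + 1) * N + r) - (((s : ℕ) : ℝ) + 1)⁻¹ ^ ((k : ℕ) + 1)|
        < 1 / (d * (2 * M + 1)) := by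
    rw [eventually_all]; intro k
    rw [eventually_all]; intro s
    rw [eventually_all]; intro r
    have := (Metric.tendsto_nhds.1 (uu_tendsto k s r)) _ hδ
    simpa [Real.dist_eq] using this
  obtain ⟨N0, hN0⟩ := eventually_atTop.1 hev
  refine ⟨fun k => ∑ s : Fin d, (M : ℝ) * (((s : ℕ) : ℝ) + 1)⁻¹ ^ ((k : ℕ) + 1),
    max N0 (2 * M + 1), by positivity, ?_⟩
  intro N hN z hz
  have hNM : 2 * M + 1 ≤ N := le_trans (le_max_right _ _) hN
  have hNe := hN0 N (le_trans (le_max_left _ _) hN)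
  set w : Fin d → ℝ := fun s => ∑ l, H s l * z l with hw
  have hwM : ∀ s, |w s| ≤ M := by
    intro s
    calc |w s| ≤ ∑ l, |H s l * z l| := Finset.abs_sum_le_sum_abs _ _
      _ ≤ ∑ l, |H s l| * ((d : ℝ) + 1) ^ (d + 1) := by
        apply Finset.sum_le_sum
        intro l _
        rw [abs_mul]
        exact mul_le_mul_of_nonneg_left (hz l) (abs_nonneg _)
      _ ≤ ∑ s : Fin d, ∑ l, |H s l| * ((d : ℝ) + 1) ^ (d + 1) := by
        apply Finset.single_le_sum (f := fun s => ∑ l, |H s l| * ((d : ℝ) + 1) ^ (d + 1))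
        · intro i _
          exact Finset.sum_nonneg (fun l _ => by positivity)
        · exact Finset.mem_univ s
      _ ≤ M := hM
  set m : Fin d → ℕ := fun s => ⌊(M : ℝ) + w s⌋₊ + 1 with hm
  have hc0 : ∀ s, 0 ≤ (M : ℝ) + w s := fun s => by
    have := (abs_le.1 (hwM s)).1; linarith
  have hm1 : ∀ s, m s ≤ 2 * M + 1 := by
    intro s
    have h1 : ⌊(M : ℝ) + w s⌋₊ ≤ 2 * M := by
      apply Nat.floor_le_of_le
      have := (abs_le.1 (hwM s)).2
      push_cast; linarith
    simp only [hm]; omega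
  have hm2 : ∀ s, |(M : ℝ) + w s - m s| ≤ 1 := by
    intro s
    have h1 := Nat.floor_le (hc0 s)
    have h2 := Nat.lt_floor_add_one ((M : ℝ) + w s)
    simp only [hm]
    push_cast
    rw [abs_le]; constructor <;> linarith
  refine ⟨Finset.univ.biUnion (fun s : Fin d =>
    Finset.Ico (((s : ℕ) + 1) * N) (((s : ℕ) + 1) * N + m s)), ?_, ?_, ?_⟩
  · refine ⟨((0 : ℕ) + 1) * N, ?_⟩
    rw [Finset.mem_biUnion]
    refine ⟨⟨0, hd⟩, Finset.mem_univ _, ?_⟩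
    simp [hm]
  · intro n hn
    rw [Finset.mem_biUnion] at hn
    obtain ⟨s, _, hs⟩ := hn
    rw [Finset.mem_Ico] at hs ⊢
    have h1 := hm1 s
    have h2 : ((s : ℕ) + 1) * N ≤ d * N := Nat.mul_le_mul_right _ s.2
    have h3 : (d + 1) * N = d * N + N := by ring
    have h4 : ((s : ℕ) + 1) * N = s * N + N := by ring
    constructor
    · have : 0 ≤ (s : ℕ) * N := Nat.zero_le _
      omega
    · omega
  · intro k
    rw [Finset.sum_biUnion]
    swap
    · intro s _ t _ hst
      have key : ∀ a b : Fin d, a < b → Disjoint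
          (Finset.Ico (((a : ℕ) + 1) * N) (((a : ℕ) + 1) * N + m a))
          (Finset.Ico (((b : ℕ) + 1) * N) (((b : ℕ) + 1) * N + m b)) := by
        intro a b hab
        rw [Finset.disjoint_left]
        intro n h1 h2
        rw [Finset.mem_Ico] at h1 h2
        have h3 := hm1 a
        have h4 : ((a : ℕ) + 1 + 1) * N ≤ ((b : ℕ) + 1) * N := by
          apply Nat.mul_le_mul_right
          have : (a : ℕ) < b := hab
          omega
        have h5 : ((a : ℕ) + 1 + 1) * N = ((a : ℕ) + 1) * N + N := by ring
        omega
      rcases lt_or_gt_of_ne hst with h | h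
      · exact key s t h
      · exact (key t s h).symm
    have hsum : ∀ s : Fin d, ∑ n ∈ Finset.Ico (((s : ℕ) + 1) * N) (((s : ℕ) + 1) * N + m s), uu k n
        = ∑ r ∈ Finset.range (m s), uu k (((s : ℕ) + 1) * N + r) := by
      intro s
      rw [Finset.sum_Ico_eq_sum_range]
      simp
    simp only [hsum]
    rw [hH z k, Finset.mul_sum, ← Finset.sum_add_distrib, ← Finset.sum_sub_distrib]
    refine le_trans (Finset.abs_sum_le_sum_abs _ _) ?_
    have hbound : ∀ s : Fin d, |(∑ l, H s l * z l) * (((s : ℕ) : ℝ) + 1)⁻¹ ^ ((k : ℕ) + 1)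
        + (M : ℝ) * (((s : ℕ) : ℝ) + 1)⁻¹ ^ ((k : ℕ) + 1)
        - (N : ℝ) ^ ((k : ℕ) + 1) * ∑ r ∈ Finset.range (m s), uu k (((s : ℕ) + 1) * N + r)|
        ≤ 1 + 1 / d := by
      intro s
      set g : ℝ := (((s : ℕ) : ℝ) + 1)⁻¹ ^ ((k : ℕ) + 1) with hg
      have hg0 : 0 ≤ g := by positivity
      have hg1 : g ≤ 1 := by
        apply pow_le_one₀ (by positivity)
        apply inv_le_one_of_one_le₀
        have : (0 : ℝ) ≤ ((s : ℕ) : ℝ) := by positivity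
        linarith
      have e : (∑ l, H s l * z l) * g + (M : ℝ) * g
        - (N : ℝ) ^ ((k : ℕ) + 1) * ∑ r ∈ Finset.range (m s), uu k (((s : ℕ) + 1) * N + r)
        = ((M : ℝ) + w s - m s) * g - ∑ r ∈ Finset.range (m s),
          ((N : ℝ) ^ ((k : ℕ) + 1) * uu k (((s : ℕ) + 1) * N + r) - g) := by
        rw [Finset.sum_sub_distrib, ← Finset.mul_sum, Finset.sum_const, Finset.card_range,
          nsmul_eq_mul]
        simp only [hw]
        ring
      rw [e]
      refine le_trans (abs_sub _ _) ?_
      apply add_le_add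
      · rw [abs_mul, abs_of_nonneg hg0]
        exact mul_le_one₀ (hm2 s) hg0 hg1
      · refine le_trans (Finset.abs_sum_le_sum_abs _ _) ?_
        calc _ ≤ ∑ r ∈ Finset.range (m s), 1 / ((d : ℝ) * (2 * M + 1)) := by
              apply Finset.sum_le_sum
              intro r hr
              have hr' : r < 2 * M + 1 := lt_of_lt_of_le (Finset.mem_range.1 hr) (hm1 s)
              exact (hNe k s ⟨r, hr'⟩).le
          _ = m s * (1 / ((d : ℝ) * (2 * M + 1))) := by simp
          _ ≤ (2 * M + 1) * (1 / ((d : ℝ) * (2 * M + 1))) := by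
              apply mul_le_mul_of_nonneg_right _ hδ.le
              exact_mod_cast hm1 s
          _ = 1 / d := by field_simp
    refine le_trans (Finset.sum_le_sum (fun s _ => hbound s)) ?_
    rw [Finset.sum_const, Finset.card_univ, Fintype.card_fin, nsmul_eq_mul]
    apply le_of_eq
    field_simp

lemma union_sum (F : ℕ → Finset ℕ) (a : ℕ → ℕ) (ha : StrictMono a)
    (hF : ∀ j, F j ⊆ Finset.Ico (a j) (a (j + 1))) (f : ℕ → ℝ) (hf : ∀ n, 0 ≤ f n) (S : ℝ)
    (hS : Tendsto (fun J => ∑ j ∈ Finset.range J, ∑ n ∈ F j, f n) atTop (𝓝 S)) :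
    HasSum (fun n : (⋃ j, (F j : Set ℕ) : Set ℕ) => f n) S := by
  classical
  have h0 : HasSum (Set.indicator (⋃ j, (F j : Set ℕ)) f) S := by
    have hnn : ∀ n, 0 ≤ Set.indicator (⋃ j, (F j : Set ℕ)) f n :=
      fun n => Set.indicator_nonneg (fun n _ => hf n) n
    rw [hasSum_iff_tendsto_nat_of_nonneg hnn]
    have hmono : Monotone (fun n => ∑ i ∈ Finset.range n, Set.indicator (⋃ j, (F j : Set ℕ)) f i) := by
      intro m n hmn
      exact Finset.sum_le_sum_of_subset_of_nonneg (Finset.range_mono hmn) (fun i _ _ => hnn i)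
    rw [tendsto_iff_tendsto_subseq_of_monotone hmono ha.tendsto_atTop]
    refine hS.congr ?_
    intro J
    have hdisj : ((Finset.range J : Finset ℕ) : Set ℕ).PairwiseDisjoint F := by
      intro s _ t _ hst
      have key : ∀ x y : ℕ, x < y → Disjoint (F x) (F y) := by
        intro x y hxy
        rw [Finset.disjoint_left]
        intro n h1 h2
        have h3 := Finset.mem_Ico.1 (hF x h1)
        have h4 := Finset.mem_Ico.1 (hF y h2)
        have h5 : a (x + 1) ≤ a y := ha.monotone hxy
        omega
      rcases lt_or_gt_of_ne hst with h | h
      · exact key s t h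
      · exact (key t s h).symm
    rw [← Finset.sum_biUnion hdisj]
    simp only [Function.comp]
    have hsub : (Finset.range J).biUnion F ⊆ Finset.range (a J) := by
      intro n hn
      obtain ⟨j, hj, hnj⟩ := Finset.mem_biUnion.1 hn
      have h3 := Finset.mem_Ico.1 (hF j hnj)
      have h5 : a (j + 1) ≤ a J := ha.monotone (Finset.mem_range.1 hj)
      rw [Finset.mem_range]; omega
    rw [← Finset.sum_subset hsub]
    · apply Finset.sum_congr rfl
      intro n hn
      obtain ⟨j, hj, hnj⟩ := Finset.mem_biUnion.1 hn
      rw [Set.indicator_of_mem]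
      exact Set.mem_iUnion.2 ⟨j, hnj⟩
    · intro n hn hn'
      apply Set.indicator_of_notMem
      intro hmem
      obtain ⟨j, hj⟩ := Set.mem_iUnion.1 hmem
      apply hn'
      refine Finset.mem_biUnion.2 ⟨j, ?_, hj⟩
      have h3 := Finset.mem_Ico.1 (hF j hj)
      rw [Finset.mem_range] at hn ⊢
      by_contra hcon
      have h5 : a J ≤ a j := ha.monotone (not_lt.1 hcon)
      omega
  exact (hasSum_subtype_iff_indicator (f := f) (s := ⋃ j, (F j : Set ℕ))).2 h0

lemma key (d : ℕ) (hd : 0 < d) : ∃ (P : Fin d → ℝ) (ε : ℝ), 0 < ε ∧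
    ∀ y : Fin d → ℝ, (∀ k, |y k| ≤ ε) → ∃ A : Set ℕ, A.Infinite ∧ (∀ n ∈ A, 0 < n) ∧
      ∀ k : Fin d, HasSum (fun n : A => uu k n) (y k + P k) := by
  obtain ⟨p, N0, hN0, hstep⟩ := step d hd
  set R : ℝ := ((d : ℝ) + 1) ^ (d + 1) with hR
  have hRpos : 0 < R := by positivity
  have hN0' : (0 : ℝ) < N0 := by exact_mod_cast hN0
  let a : ℕ → ℕ := fun j => (d + 1) ^ j * N0
  have hasucc : ∀ j, a (j + 1) = (d + 1) * a j := by
    intro j; simp only [a]; ring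
  have hapos : ∀ j, 0 < a j := fun j => by simp only [a]; positivity
  have hage : ∀ j, N0 ≤ a j := fun j => Nat.le_mul_of_pos_left _ (by positivity)
  have hamono : StrictMono a := by
    apply strictMono_nat_of_lt_succ
    intro j
    rw [hasucc]
    have := hapos j
    nlinarith
  have hapos' : ∀ j, (0 : ℝ) < a j := fun j => by exact_mod_cast hapos j
  have hsummable : ∀ k : Fin d, Summable (fun j => p k / (a j : ℝ) ^ ((k : ℕ) + 1)) := by
    intro k
    have hq : Summable (fun j : ℕ => ((((d : ℝ) + 1) ^ ((k : ℕ) + 1))⁻¹) ^ j) := by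
      apply summable_geometric_of_lt_one (by positivity)
      apply inv_lt_one_of_one_lt₀
      apply one_lt_pow₀ _ (by omega)
      have : (0 : ℝ) < d := by exact_mod_cast hd
      linarith
    have := hq.mul_left (p k / (N0 : ℝ) ^ ((k : ℕ) + 1))
    refine this.congr ?_
    intro j
    simp only [a]
    push_cast
    rw [mul_pow, ← pow_mul, inv_pow, ← pow_mul, mul_comm j]
    field_simp
  refine ⟨fun k => ∑' j, p k / (a j : ℝ) ^ ((k : ℕ) + 1), R / (N0 : ℝ) ^ d, by positivity, ?_⟩
  intro y0 hy0
  have hex : ∀ (j : ℕ) (y : Fin d → ℝ), ∃ F : Finset ℕ,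
      (∀ k : Fin d, |(a j : ℝ) ^ ((k : ℕ) + 1) * y k| ≤ R) →
      F.Nonempty ∧ F ⊆ Finset.Ico (a j) (a (j + 1)) ∧
      ∀ k : Fin d, |(a j : ℝ) ^ ((k : ℕ) + 1) * y k + p k
        - (a j : ℝ) ^ ((k : ℕ) + 1) * ∑ n ∈ F, uu k n| ≤ (d : ℝ) + 1 := by
    intro j y
    by_cases h : ∀ k : Fin d, |(a j : ℝ) ^ ((k : ℕ) + 1) * y k| ≤ R
    · obtain ⟨F, h1, h2, h3⟩ := hstep (a j) (hage j) _ h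
      exact ⟨F, fun _ => ⟨h1, by rw [hasucc]; exact h2, h3⟩⟩
    · exact ⟨∅, fun h' => absurd h' h⟩
  choose Φ hΦ using hex
  let y : ℕ → Fin d → ℝ := fun j => Nat.rec y0
    (fun j y k => y k + p k / (a j : ℝ) ^ ((k : ℕ) + 1) - ∑ n ∈ Φ j y, uu k n) j
  have hysucc : ∀ j k, y (j + 1) k = y j k + p k / (a j : ℝ) ^ ((k : ℕ) + 1)
      - ∑ n ∈ Φ j (y j), uu k n := fun j k => rfl
  have hinv : ∀ j, ∀ k : Fin d, |(a j : ℝ) ^ ((k : ℕ) + 1) * y j k| ≤ R := by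
    intro j
    induction j with
    | zero =>
      intro k
      have e : (a 0 : ℝ) = N0 := by simp [a]
      rw [e, abs_mul, abs_of_pos (by positivity)]
      calc (N0 : ℝ) ^ ((k : ℕ) + 1) * |y 0 k| ≤ (N0 : ℝ) ^ d * (R / (N0 : ℝ) ^ d) := by
            apply mul_le_mul _ (hy0 k) (abs_nonneg _) (by positivity)
            apply pow_le_pow_right₀ _ k.2
            exact_mod_cast hN0
        _ = R := by field_simp
    | succ j ih =>
      intro k
      have h := (hΦ j (y j) ih).2.2 k
      have haj := hapos' j
      have e : (a (j + 1) : ℝ) ^ ((k : ℕ) + 1) * y (j + 1) k = ((d : ℝ) + 1) ^ ((k : ℕ) + 1) *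
          ((a j : ℝ) ^ ((k : ℕ) + 1) * y j k + p k
            - (a j : ℝ) ^ ((k : ℕ) + 1) * ∑ n ∈ Φ j (y j), uu k n) := by
        rw [hysucc, hasucc]
        push_cast
        rw [mul_pow]
        field_simp
      rw [e, abs_mul, abs_of_pos (by positivity), hR, pow_succ _ d]
      apply mul_le_mul _ h (abs_nonneg _) (by positivity)
      apply pow_le_pow_right₀ _ k.2
      have : (0 : ℝ) < d := by exact_mod_cast hd
      linarith
  have hΦ' := fun j => hΦ j (y j) (hinv j)
  refine ⟨⋃ j, (Φ j (y j) : Set ℕ), ?_, ?_, ?_⟩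
  · rw [Set.infinite_iff_exists_gt]
    intro b
    obtain ⟨n, hn⟩ := (hΦ' (b + 1)).1
    refine ⟨n, Set.mem_iUnion.2 ⟨b + 1, hn⟩, ?_⟩
    have h1 := Finset.mem_Ico.1 ((hΦ' (b + 1)).2.1 hn)
    have h2 := hamono.le_apply (x := b + 1)
    omega
  · intro n hn
    obtain ⟨j, hj⟩ := Set.mem_iUnion.1 hn
    have h1 := Finset.mem_Ico.1 ((hΦ' j).2.1 hj)
    have := hapos j
    omega
  · intro k
    apply union_sum (fun j => Φ j (y j)) a hamono (fun j => (hΦ' j).2.1) (uu k) (uu_nonneg k)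
    have hpart : ∀ J, ∑ j ∈ Finset.range J, ∑ n ∈ Φ j (y j), uu k n
        = (y0 k - y J k) + ∑ j ∈ Finset.range J, p k / (a j : ℝ) ^ ((k : ℕ) + 1) := by
      intro J
      induction J with
      | zero => simp [y]
      | succ J ih =>
        rw [Finset.sum_range_succ, Finset.sum_range_succ, ih, hysucc]
        ring
    have hy : Tendsto (fun J => y J k) atTop (𝓝 0) := by
      have hlim : Tendsto (fun J => R / (a J : ℝ)) atTop (𝓝 0) :=
        (tendsto_const_div_atTop_nhds_zero_nat R).comp hamono.tendsto_atTop
      apply squeeze_zero_norm _ hlim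
      intro J
      have h := hinv J k
      have hJ := hapos' J
      have hJ1 : (1 : ℝ) ≤ a J := by exact_mod_cast hapos J
      rw [abs_mul, abs_of_pos (by positivity)] at h
      rw [Real.norm_eq_abs, le_div_iff₀ hJ]
      refine le_trans ?_ h
      rw [mul_comm]
      apply mul_le_mul_of_nonneg_right _ (abs_nonneg _)
      exact le_self_pow₀ hJ1 (by omega)
    have := (hy.const_sub (y0 k)).add (hsummable k).hasSum.tendsto_sum_nat
    rw [sub_zero] at this
    exact this.congr (fun J => (hpart J).symm)

/-- The set of points `(∑_{n∈A} 1/n, …, ∑_{n∈A} 1/(n+d-1))`, over infinite sets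
`A` of positive integers with `∑_{n∈A} 1/n < ∞`, has nonempty interior in `ℝ^d`. -/
theorem stmt_16 (d : ℕ) (hd : 0 < d) :
    (interior {x : Fin d → ℝ | ∃ A : Set ℕ, A.Infinite ∧ (∀ n ∈ A, 0 < n) ∧
        Summable (fun n : A => (1 : ℝ) / (n : ℕ)) ∧
        ∀ i : Fin d, x i = ∑' n : A, (1 : ℝ) / ((n : ℕ) + (i : ℕ))}).Nonempty := by
  obtain ⟨P, ε, hε, hkey⟩ := key d hd
  let L : Matrix (Fin d) (Fin d) ℝ := fun k i =>
    (-1 : ℝ) ^ (i : ℕ) * ((k : ℕ).choose i) / ((k : ℕ).factorial)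
  have hL : IsUnit L.det := by
    rw [isUnit_iff_ne_zero, Matrix.det_of_lowerTriangular]
    · apply Finset.prod_ne_zero_iff.2
      intro i _
      simp [L, Nat.factorial_ne_zero]
    · intro i j hij
      have : (i : ℕ) < j := hij
      simp [L, Nat.choose_eq_zero_of_lt this]
  have hLv : ∀ n : ℕ, 0 < n → L.mulVec (fun i : Fin d => (1 : ℝ) / ((n : ℝ) + (i : ℕ)))
      = fun k : Fin d => uu k n := by
    intro n hn
    funext k
    have h1 := uu_sum k n hn
    have h2 : ∑ i ∈ Finset.range ((k : ℕ) + 1),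
        (-1 : ℝ) ^ i * ((k : ℕ).choose i) * (1 / ((n : ℝ) + i))
        = ∑ i ∈ Finset.range d, (-1 : ℝ) ^ i * ((k : ℕ).choose i) * (1 / ((n : ℝ) + i)) := by
      apply Finset.sum_subset (Finset.range_mono k.2)
      intro i _ hi
      rw [Finset.mem_range, not_lt] at hi
      rw [Nat.choose_eq_zero_of_lt (by omega)]
      simp
    have hfac : ((k : ℕ).factorial : ℝ) ≠ 0 := by exact_mod_cast Nat.factorial_ne_zero _
    have h3 : uu k n = (∑ i ∈ Finset.range d,
        (-1 : ℝ) ^ i * ((k : ℕ).choose i) * (1 / ((n : ℝ) + i))) / (k : ℕ).factorial := by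
      rw [← h2, h1]; field_simp
    rw [h3, ← Fin.sum_univ_eq_sum_range
      (fun i => (-1 : ℝ) ^ i * ((k : ℕ).choose i) * (1 / ((n : ℝ) + i))) d, Finset.sum_div]
    simp only [Matrix.mulVec, dotProduct, L]
    apply Finset.sum_congr rfl
    intro i _
    ring
  have hv : ∀ n : ℕ, 0 < n → ∀ i : Fin d, (1 : ℝ) / ((n : ℝ) + (i : ℕ))
      = ∑ k : Fin d, L⁻¹ i k * uu k n := by
    intro n hn i
    have h1 : L⁻¹.mulVec (L.mulVec (fun i : Fin d => (1 : ℝ) / ((n : ℝ) + (i : ℕ))))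
        = (fun i : Fin d => (1 : ℝ) / ((n : ℝ) + (i : ℕ))) := by
      rw [Matrix.mulVec_mulVec, Matrix.nonsing_inv_mul _ hL, Matrix.one_mulVec]
    rw [hLv n hn] at h1
    have h2 := congrFun h1 i
    simp only [Matrix.mulVec, dotProduct] at h2
    exact h2.symm
  refine ⟨L⁻¹.mulVec P, ?_⟩
  rw [mem_interior]
  refine ⟨(fun x => L.mulVec x) ⁻¹' Metric.ball P ε, ?_, ?_, ?_⟩
  · intro x hx
    rw [Set.mem_preimage, Metric.mem_ball] at hx
    obtain ⟨A, hA, hpos, hsum⟩ := hkey (fun k => L.mulVec x k - P k) (by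
      intro k
      have := dist_le_pi_dist (L.mulVec x) P k
      rw [Real.dist_eq] at this
      linarith)
    have hi : ∀ i : Fin d, HasSum (fun n : A => (1 : ℝ) / ((n : ℕ) + (i : ℕ))) (x i) := by
      intro i
      have h1 : HasSum (fun n : A => ∑ k : Fin d, L⁻¹ i k * uu k n)
          (∑ k : Fin d, L⁻¹ i k * (L.mulVec x k - P k + P k)) :=
        hasSum_sum (fun k _ => (hsum k).mul_left _)
      have h2 : ∑ k : Fin d, L⁻¹ i k * (L.mulVec x k - P k + P k) = x i := by
        have h3 : L⁻¹.mulVec (L.mulVec x) = x := by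
          rw [Matrix.mulVec_mulVec, Matrix.nonsing_inv_mul _ hL, Matrix.one_mulVec]
        have h4 := congrFun h3 i
        conv_rhs => rw [← h4]
        simp only [sub_add_cancel]
        rfl
      rw [h2] at h1
      convert h1 using 2 with n
      exact hv n (hpos n n.2) i
    refine ⟨A, hA, hpos, ?_, fun i => (hi i).tsum_eq.symm⟩
    have := (hi ⟨0, hd⟩).summable
    simpa using this
  · apply Metric.isOpen_ball.preimage
    exact Continuous.matrix_mulVec continuous_const continuous_id
  · rw [Set.mem_preimage, Matrix.mulVec_mulVec, Matrix.mul_nonsing_inv _ hL, Matrix.one_mulVec]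
    exact Metric.mem_ball_self hε
end
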